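/- arXiv:2512.20079 — 4 statements merged into one kernel-verified Lean document; each statement's English description precedes it below -/
import Mathlib

section
/- Let p be a polynomial over ℂ of degree at least 2, let T(z) = αz + β with α, β ∈ ℂ, α ≠ 0, let λ ∈ ℂ, λ ≠ 0, and set g = λ·(p ∘ T). Then for every z ∈ ℂ with p′(T(z)) ≠ 0, one has T(C_g(z)) = C_p(T(z)) (the Scaling property of Chebyshev's method). -/
open Polynomial

/-- Chebyshev's method applied to a polynomial `p` over `ℂ`:
`C_p(z) = z - (1 + L_p(z)/2) * p(z)/p'(z)` where `L_p(z) = p(z) p''(z) / (p'(z))^2`. -/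
noncomputable def cheb (p : Polynomial ℂ) (z : ℂ) : ℂ :=
  z - (1 + (p.eval z * (derivative (derivative p)).eval z) / ((derivative p).eval z) ^ 2 / 2)
      * (p.eval z / (derivative p).eval z)

/-!
For `g = c · (p ∘ T)` with `T z = a z + b`, each derivative of `g` gains one factor `a`. Since `L_q`
is homogeneous of degree zero in `q` and carries two derivatives upstairs and two downstairs, both
factors cancel and `L_g = L_p ∘ T`. The Newton correction `q / q'` has one derivative downstairs, so
it only picks up `1 / a`, which `T` turns back into `1`. Only the invariance of `L` matters, so
`1 + t / 2` may be replaced by any function of `L`.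
-/

section AffineRescale

variable {R : Type*} [CommSemiring R] (c a b : R) (p : R[X])

/-- The polynomial `c · (p ∘ T)` for the affine map `T z = a z + b`. The outer factor `c` makes the
family stable under differentiation, which multiplies it by `a`. -/
noncomputable def affineRescale : R[X] :=
  C c * p.comp (C a * X + C b)

theorem eval_affineRescale (z : R) :
    (affineRescale c a b p).eval z = c * p.eval (a * z + b) := by
  simp [affineRescale]

theorem derivative_affineRescale :
    derivative (affineRescale c a b p) = affineRescale (c * a) a b (derivative p) := by
  simp [affineRescale, derivative_comp, mul_assoc]

end AffineRescale

section CorrectedNewton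

variable {K : Type*} [Field K]

/-- The degree of logarithmic convexity `L_q(z) = q(z) q''(z) / q'(z)²`, the quantity through which
third-order methods correct Newton's method. It has the junk value `0` where `q'` vanishes. -/
noncomputable def logConvexityDegree (q : K[X]) (z : K) : K :=
  q.eval z * (derivative (derivative q)).eval z / (derivative q).eval z ^ 2

/-- The step `q(z) / q'(z)` that Newton's method subtracts from `z`. It has the junk value `0` where
`q'` vanishes. -/
noncomputable def newtonCorrection (q : K[X]) (z : K) : K :=
  q.eval z / (derivative q).eval z

/-- The iteration `z ↦ z - φ (L_q(z)) · q(z) / q'(z)`. The weight `φ` is `1` for Newton's method,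
`1 + t / 2` for Chebyshev's and `(1 - t / 2)⁻¹` for Halley's. -/
noncomputable def correctedNewton (φ : K → K) (q : K[X]) (z : K) : K :=
  z - φ (logConvexityDegree q z) * newtonCorrection q z

variable {c a : K}

theorem logConvexityDegree_affineRescale (hc : c ≠ 0) (ha : a ≠ 0) (b : K) (p : K[X]) (z : K) :
    logConvexityDegree (affineRescale c a b p) z = logConvexityDegree p (a * z + b) := by
  simp only [logConvexityDegree, derivative_affineRescale, eval_affineRescale]
  set y := p.eval (a * z + b)
  set y' := (derivative p).eval (a * z + b)
  set y'' := (derivative (derivative p)).eval (a * z + b)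
  calc c * y * (c * a * a * y'') / (c * a * y') ^ 2
    _ = (c * a) ^ 2 * (y * y'') / ((c * a) ^ 2 * y' ^ 2) := by ring
    _ = y * y'' / y' ^ 2 := mul_div_mul_left _ _ (pow_ne_zero 2 (mul_ne_zero hc ha))

theorem newtonCorrection_affineRescale (hc : c ≠ 0) (a b : K) (p : K[X]) (z : K) :
    newtonCorrection (affineRescale c a b p) z = newtonCorrection p (a * z + b) / a := by
  simp only [newtonCorrection, derivative_affineRescale, eval_affineRescale]
  rw [mul_assoc c a, mul_div_mul_left _ _ hc, div_mul_eq_div_div_swap]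

theorem chebyshev_scaling_property_general (φ : K → K) (hc : c ≠ 0) (ha : a ≠ 0) (b : K)
    (p : K[X]) (z : K) (hz : (derivative p).eval (a * z + b) ≠ 0) :
    (derivative (affineRescale c a b p)).eval z ≠ 0 ∧
      a * correctedNewton φ (affineRescale c a b p) z + b = correctedNewton φ p (a * z + b) := by
  constructor
  · rw [derivative_affineRescale, eval_affineRescale]
    exact mul_ne_zero (mul_ne_zero hc ha) hz
  · set w := a * z + b
    set weight := φ (logConvexityDegree p w)
    calc a * correctedNewton φ (affineRescale c a b p) z + b
      _ = a * (z - weight * (newtonCorrection p w / a)) + b := by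
          rw [correctedNewton, logConvexityDegree_affineRescale hc ha,
            newtonCorrection_affineRescale hc]
      _ = w - weight * (a * (newtonCorrection p w / a)) := by ring
      _ = w - weight * newtonCorrection p w := by rw [mul_div_cancel₀ _ ha]

end CorrectedNewton

theorem cheb_eq_correctedNewton (p : ℂ[X]) (z : ℂ) :
    cheb p z = correctedNewton (fun t ↦ 1 + t / 2) p z :=
  rfl

/-- Scaling property of Chebyshev's method: if `g = λ • (p ∘ T)` for an affine map
`T(z) = αz + β` with `α ≠ 0` and `λ ≠ 0`, then `T(C_g(z)) = C_p(T(z))` wherever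
`p'(T(z)) ≠ 0`. -/
theorem chebyshev_scaling_property (p : Polynomial ℂ) (hp : 2 ≤ p.natDegree)
    (α β lam : ℂ) (hα : α ≠ 0) (hlam : lam ≠ 0)
    (T : ℂ → ℂ) (hT : ∀ z : ℂ, T z = α * z + β)
    (g : Polynomial ℂ)
    (hg : g = Polynomial.C lam * p.comp (Polynomial.C α * Polynomial.X + Polynomial.C β))
    (z : ℂ) (hz : (derivative p).eval (T z) ≠ 0) :
    T (cheb g z) = cheb p (T z) := by
  obtain rfl : T = fun z ↦ α * z + β := funext hT
  obtain rfl : g = affineRescale lam α β p := hg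
  simp only [cheb_eq_correctedNewton]
  exact (chebyshev_scaling_property_general _ hlam hα β p z hz).2
end

section
/- Fix integers k, m ≥ 1. The real map C has strictly positive derivative at every point of (−∞, 0) ∪ (1, ∞); in particular C has no critical point in (−∞, 0) ∪ (1, ∞). -/
/-!
Chebyshev's method for `f` has derivative `f² (3 f''² - f' f''') / (2 f'⁴)`. If `f` is a
real-rooted polynomial, then so is `f'` by Rolle's theorem, and Laguerre's inequality
`f' f''' < f''²` makes this derivative positive wherever neither `f` nor `f'` vanishes. For
`f = X ^ k * (X - 1) ^ m` the excluded points are `0`, `1` and `k / (k + m)`, all of which lie in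
`[0, 1]`, and the closed form of the method comes from the differential equation
`X (X - 1) f' = ((k + m) X - k) f`.
-/

open Polynomial

section ChebyshevMap

variable {𝕜 : Type*} [NontriviallyNormedField 𝕜]

/-- Chebyshev's root-finding method `x ↦ x - (1 + L / 2) f / f'` with `L = f f'' / f' ^ 2`. At the
zeros of `f'` it takes the junk value `x`. -/
noncomputable def chebyshevMap (f : 𝕜 → 𝕜) (x : 𝕜) : 𝕜 :=
  x - (1 + f x * iteratedDeriv 2 f x / (2 * deriv f x ^ 2)) * (f x / deriv f x)

theorem hasDerivAt_chebyshevMap [NeZero (2 : 𝕜)] {f : 𝕜 → 𝕜} {x : 𝕜} (hf' : deriv f x ≠ 0)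
    (hd₁ : DifferentiableAt 𝕜 (deriv f) x) (hd₂ : DifferentiableAt 𝕜 (iteratedDeriv 2 f) x) :
    HasDerivAt (chebyshevMap f)
      (f x ^ 2 * (3 * iteratedDeriv 2 f x ^ 2 - deriv f x * iteratedDeriv 3 f x)
        / (2 * deriv f x ^ 4)) x := by
  have h₀ : HasDerivAt f (deriv f x) x := (differentiableAt_of_deriv_ne_zero hf').hasDerivAt
  have h₁ : HasDerivAt (deriv f) (iteratedDeriv 2 f x) x := by
    simpa only [iteratedDeriv_succ, iteratedDeriv_zero] using hd₁.hasDerivAt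
  have h₂ : HasDerivAt (iteratedDeriv 2 f) (iteratedDeriv 3 f x) x := by
    simpa only [iteratedDeriv_succ] using hd₂.hasDerivAt
  have two_ne : (2 : 𝕜) ≠ 0 := two_ne_zero
  have hL := (h₀.fun_mul h₂).fun_div ((h₁.fun_pow 2).const_mul 2) (by positivity)
  refine ((hasDerivAt_id' x).fun_sub ((hL.const_add 1).fun_mul (h₀.fun_div h₁ hf'))).congr_deriv ?_
  field_simp
  ring

theorem iteratedDeriv_polynomial_eval (p : 𝕜[X]) (n : ℕ) :
    iteratedDeriv n (fun x => p.eval x) = fun x => (derivative^[n] p).eval x := by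
  induction n with
  | zero => simp
  | succ n ih =>
    ext x
    rw [iteratedDeriv_succ, ih, Polynomial.deriv, Function.iterate_succ_apply']

theorem hasDerivAt_chebyshevMap_polynomial [NeZero (2 : 𝕜)] {p : 𝕜[X]} {x : 𝕜}
    (hp' : (derivative p).eval x ≠ 0) :
    HasDerivAt (chebyshevMap fun y => p.eval y)
      (p.eval x ^ 2 * (3 * (derivative^[2] p).eval x ^ 2
        - (derivative p).eval x * (derivative^[3] p).eval x)
        / (2 * (derivative p).eval x ^ 4)) x := by
  have hderiv : deriv (fun y => p.eval y) = fun y => (derivative p).eval y := by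
    ext y
    exact p.deriv
  have h := hasDerivAt_chebyshevMap (f := fun y => p.eval y) (x := x)
  simp only [hderiv, iteratedDeriv_polynomial_eval] at h
  exact h hp' (Polynomial.differentiableAt _) (Polynomial.differentiableAt _)

end ChebyshevMap

section Laguerre

variable {R : Type*} [CommRing R]

/-- The Laguerre expression `p' ^ 2 - p * p''`, that is, `-p ^ 2 * (p' / p)'`. Laguerre's inequality
says that it is nonnegative when `p` is real-rooted. -/
noncomputable def laguerreExpr (p : R[X]) : R[X] :=
  derivative p ^ 2 - p * derivative (derivative p)

theorem laguerreExpr_mul (p q : R[X]) :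
    laguerreExpr (p * q) = p ^ 2 * laguerreExpr q + q ^ 2 * laguerreExpr p := by
  simp only [laguerreExpr, derivative_mul, derivative_add]
  ring

theorem laguerreExpr_C (a : R) : laguerreExpr (C a) = 0 := by
  simp [laguerreExpr]

theorem laguerreExpr_X_add_C (a : R) : laguerreExpr (X + C a) = 1 := by
  simp [laguerreExpr]

variable [LinearOrder R] [IsStrictOrderedRing R] {p : R[X]}

theorem eval_laguerreExpr_nonneg_of_splits (hp : p.Splits) (x : R) :
    0 ≤ (laguerreExpr p).eval x := by
  induction hp using Submonoid.closure_induction with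
  | mem q hq =>
    obtain ⟨a, rfl⟩ | ⟨a, rfl⟩ := hq
    · simp [laguerreExpr_C]
    · simp [laguerreExpr_X_add_C]
  | one => simp [laguerreExpr]
  | mul p q _ _ hp hq =>
    simp only [laguerreExpr_mul, eval_add, eval_mul, eval_pow]
    positivity

theorem eval_laguerreExpr_pos_of_splits (hp : p.Splits) (hdeg : p.natDegree ≠ 0) {x : R}
    (hx : p.eval x ≠ 0) : 0 < (laguerreExpr p).eval x := by
  obtain ⟨r, hr⟩ := hp.exists_eval_eq_zero (mt natDegree_eq_of_degree_eq_some hdeg)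
  obtain ⟨q, rfl⟩ := dvd_iff_isRoot.2 hr
  rw [eval_mul] at hx
  have hq : 0 ≤ (laguerreExpr q).eval x :=
    eval_laguerreExpr_nonneg_of_splits (splits_X_sub_C_mul_iff.1 hp) x
  have hqx : q.eval x ≠ 0 := right_ne_zero_of_mul hx
  have hlin : (laguerreExpr (X - C r)).eval x = 1 := by
    rw [sub_eq_add_neg, ← C_neg, laguerreExpr_X_add_C, eval_one]
  rw [laguerreExpr_mul, eval_add, eval_mul, eval_mul, eval_pow, eval_pow, hlin]
  positivity

end Laguerre

section RealRooted

variable {p : ℝ[X]}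

theorem splits_derivative_of_splits (hp : p.Splits) : (derivative p).Splits := by
  rw [splits_iff_card_roots] at hp ⊢
  have hrolle := card_roots_le_derivative p
  have hcard := card_roots' (derivative p)
  have hdeg := natDegree_derivative p
  omega

theorem deriv_chebyshevMap_pos_of_splits_derivative (hp' : (derivative p).Splits)
    (hdeg : 2 ≤ p.natDegree) {x : ℝ} (hx : p.eval x ≠ 0) (hx' : (derivative p).eval x ≠ 0) :
    0 < deriv (chebyshevMap fun y => p.eval y) x := by
  have hdeg' : (derivative p).natDegree ≠ 0 := by
    rw [natDegree_derivative]
    omega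
  have hlaguerre : 0 < (derivative^[2] p).eval x ^ 2
      - (derivative p).eval x * (derivative^[3] p).eval x := by
    simpa [laguerreExpr] using eval_laguerreExpr_pos_of_splits hp' hdeg' hx'
  rw [(hasDerivAt_chebyshevMap_polynomial hx').deriv]
  refine div_pos (mul_pos (by positivity) ?_) (by positivity)
  linarith [sq_nonneg ((derivative^[2] p).eval x)]

end RealRooted

section XPowMulXSubOnePow

theorem natDegree_X_pow_mul_X_sub_one_pow {R : Type*} [CommRing R] [Nontrivial R] (k m : ℕ) :
    (X ^ k * (X - 1) ^ m : R[X]).natDegree = k + m := by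
  have hmonic : (X - C 1 : R[X]).Monic := monic_X_sub_C 1
  rw [← C_1, (monic_X_pow k).natDegree_mul (hmonic.pow m), natDegree_X_pow, hmonic.natDegree_pow,
    natDegree_X_sub_C, mul_one]

theorem mul_derivative_pow {R : Type*} [CommSemiring R] (f : R[X]) (n : ℕ) :
    f * derivative (f ^ n) = C (n : R) * f ^ n * derivative f := by
  cases n with
  | zero => simp
  | succ n =>
    rw [derivative_pow, Nat.add_sub_cancel]
    ring

theorem X_mul_X_sub_one_mul_derivative {R : Type*} [CommRing R] (k m : ℕ) :
    X * (X - 1) * derivative (X ^ k * (X - 1) ^ m)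
      = (C (k + m : R) * X - C (k : R)) * (X ^ k * (X - 1) ^ m) := by
  have hX := mul_derivative_pow (X : R[X]) k
  have hX₁ := mul_derivative_pow (X - 1 : R[X]) m
  simp only [derivative_sub, derivative_X, derivative_one] at hX hX₁
  rw [derivative_mul, C_add]
  linear_combination (X - 1) * (X - 1) ^ m * hX + X * X ^ k * hX₁

theorem X_mul_X_sub_one_mul_derivative_derivative {R : Type*} [CommRing R] (k m : ℕ) :
    X * (X - 1) * derivative (derivative (X ^ k * (X - 1) ^ m))
      = (C (k + m - 2 : R) * X - C (k - 1 : R)) * derivative (X ^ k * (X - 1) ^ m)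
        + C (k + m : R) * (X ^ k * (X - 1) ^ m) := by
  have h := congrArg derivative (X_mul_X_sub_one_mul_derivative (R := R) k m)
  generalize (X ^ k * (X - 1) ^ m : R[X]) = p at h ⊢
  simp only [derivative_mul, derivative_sub, derivative_X, derivative_one, derivative_C] at h
  simp only [C_sub, C_1, C_ofNat]
  linear_combination h

variable {K : Type*} [Field K] (k m : ℕ) {x : K}

theorem eval_derivative_X_pow_mul_X_sub_one_pow (hx₀ : x ≠ 0) (hx₁ : x ≠ 1) :
    (derivative (X ^ k * (X - 1) ^ m)).eval x
      = ((k + m) * x - k) / (x * (x - 1)) * (x ^ k * (x - 1) ^ m) := by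
  have hx₁' : x - 1 ≠ 0 := sub_ne_zero.2 hx₁
  have h := congrArg (eval x) (X_mul_X_sub_one_mul_derivative (R := K) k m)
  simp only [eval_mul, eval_sub, eval_pow, eval_X, eval_one, eval_C] at h
  field_simp
  linear_combination h

theorem eval_derivative_derivative_X_pow_mul_X_sub_one_pow (hx₀ : x ≠ 0) (hx₁ : x ≠ 1) :
    (derivative (derivative (X ^ k * (X - 1) ^ m))).eval x
      = (((k + m) * x - k) ^ 2 - ((k + m) * x ^ 2 - 2 * k * x + k)) / (x * (x - 1)) ^ 2
        * (x ^ k * (x - 1) ^ m) := by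
  have hx₁' : x - 1 ≠ 0 := sub_ne_zero.2 hx₁
  have h := congrArg (eval x) (X_mul_X_sub_one_mul_derivative_derivative (R := K) k m)
  simp only [eval_add, eval_mul, eval_sub, eval_pow, eval_X, eval_one, eval_C,
    eval_derivative_X_pow_mul_X_sub_one_pow k m hx₀ hx₁] at h
  field_simp at h ⊢
  linear_combination h

theorem chebyshevMap_X_pow_mul_X_sub_one_pow {𝕜 : Type*} [NontriviallyNormedField 𝕜]
    [NeZero (2 : 𝕜)] (k m : ℕ) {x : 𝕜} (hx₀ : x ≠ 0) (hx₁ : x ≠ 1)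
    (hξ : (k + m) * x - k ≠ 0) :
    chebyshevMap (fun y => (X ^ k * (X - 1) ^ m : 𝕜[X]).eval y) x
      = x - x * (x - 1) *
        ((k + m) * (3 * k + 3 * m - 1) * x ^ 2 - 2 * k * (3 * k + 3 * m - 1) * x
          + (3 * k ^ 2 - k)) / (2 * ((k + m) * x - k) ^ 3) := by
  have hx₁' : x - 1 ≠ 0 := sub_ne_zero.2 hx₁
  have two_ne : (2 : 𝕜) ≠ 0 := two_ne_zero
  have hp : (X ^ k * (X - 1) ^ m : 𝕜[X]).eval x = x ^ k * (x - 1) ^ m := by simp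
  simp only [chebyshevMap, iteratedDeriv_polynomial_eval, Polynomial.deriv, hp,
    Function.iterate_succ_apply, Function.iterate_zero_apply,
    eval_derivative_X_pow_mul_X_sub_one_pow k m hx₀ hx₁,
    eval_derivative_derivative_X_pow_mul_X_sub_one_pow k m hx₀ hx₁]
  generalize hA : (k + m) * x - k = A at hξ ⊢
  field_simp
  subst hA
  ring

end XPowMulXSubOnePow

theorem chebyshev_no_real_critical_points_general (k m : ℕ) (hkm : 2 ≤ k + m) (C : ℝ → ℝ)
    (hC : ∀ x : ℝ, x ≠ (k : ℝ) / ((k : ℝ) + m) →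
      C x = x - x * (x - 1) *
        (((k : ℝ) + m) * (3 * k + 3 * m - 1) * x ^ 2 - 2 * k * (3 * k + 3 * m - 1) * x
          + (3 * (k : ℝ) ^ 2 - k)) / (2 * (((k : ℝ) + m) * x - k) ^ 3))
    {x : ℝ} (hx₀ : x ≠ 0) (hx₁ : x ≠ 1) (hξ : x ≠ (k : ℝ) / ((k : ℝ) + m)) :
    0 < deriv C x := by
  set p : ℝ[X] := X ^ k * (X - 1) ^ m with hp
  have hn : (k : ℝ) + m ≠ 0 := by
    norm_cast
    omega
  have hA {y : ℝ} (hy : y ≠ k / (k + m)) : (k + m) * y - k ≠ 0 := by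
    rwa [sub_ne_zero, mul_comm, Ne, ← eq_div_iff hn]
  have hCp : C =ᶠ[nhds x] chebyshevMap fun y => p.eval y := by
    filter_upwards [isOpen_ne.mem_nhds hx₀, isOpen_ne.mem_nhds hx₁, isOpen_ne.mem_nhds hξ]
      with y hy₀ hy₁ hyξ
    rw [hC y hyξ, chebyshevMap_X_pow_mul_X_sub_one_pow k m hy₀ hy₁ (hA hyξ)]
  have hsplits : p.Splits := (Splits.X_pow k).mul ((Splits.X_sub_C 1).pow m)
  have hpx : p.eval x ≠ 0 := by simp [hp, hx₀, sub_ne_zero.2 hx₁]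
  have hp'x : (derivative p).eval x ≠ 0 := by
    rw [eval_derivative_X_pow_mul_X_sub_one_pow k m hx₀ hx₁]
    simp [hA hξ, hx₀, sub_ne_zero.2 hx₁]
  rw [hCp.deriv_eq]
  exact deriv_chebyshevMap_pos_of_splits_derivative (splits_derivative_of_splits hsplits)
    (by rwa [natDegree_X_pow_mul_X_sub_one_pow]) hpx hp'x

/-- For `k, m ≥ 1`, the real Chebyshev map `C` for `p(z) = z^k(z-1)^m` has strictly positive
derivative at every point of `(-∞, 0) ∪ (1, ∞)`; in particular it has no critical point
there. -/
theorem chebyshev_no_real_critical_points (k m : ℕ) (hk : 1 ≤ k) (hm : 1 ≤ m)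
    (C : ℝ → ℝ)
    (hC : ∀ x : ℝ, x ≠ (k : ℝ) / ((k : ℝ) + m) →
      C x = x - x * (x - 1) *
        (((k : ℝ) + m) * (3 * k + 3 * m - 1) * x ^ 2 - 2 * k * (3 * k + 3 * m - 1) * x
          + (3 * (k : ℝ) ^ 2 - k)) / (2 * (((k : ℝ) + m) * x - k) ^ 3)) :
    ∀ x : ℝ, x < 0 ∨ 1 < x → 0 < deriv C x ∧ deriv C x ≠ 0 := by
  intro x hx
  have hξ₀ : (0 : ℝ) ≤ k / (k + m) := by positivity
  have hξ₁ : (k : ℝ) / (k + m) ≤ 1 := div_le_one_of_le₀ (by simp) (by positivity)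
  have h : 0 < deriv C x := chebyshev_no_real_critical_points_general k m (by omega) C hC
    (by grind) (by grind) (by grind)
  exact ⟨h, h.ne'⟩
end

section
/- Fix integers k, m ≥ 1 and set e₁ = k/(k+m) − √(km(3k+3m−1))/((k+m)(3k+3m−1)) and e₂ = k/(k+m) + √(km(3k+3m−1))/((k+m)(3k+3m−1)). Then E(e₁) = E(e₂) = 0, C(e₁) = e₁, C(e₂) = e₂, and 0 < e₁ < k/(k+m) < e₂ < 1; i.e. both extraneous fixed points of C are real, distinct, lie in (0,1), and lie on opposite sides of and equidistant from the pole ξ = k/(k+m). -/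
/-!
Completing the square gives `(k + m) E(x) = (3k + 3m - 1) ((k + m) x - k)² - k m`, so the roots of
`E` lie symmetrically about the pole `k / (k + m)`, and the correction term of `C` vanishes at them.
Since `(3k + 3m - 1) k - m = (k + m) (3k - 1)`, the smaller root is positive as soon as `k > 1/3`;
the reflection `x ↦ 1 - x`, which exchanges `k` and `m`, bounds the larger root by `1`.
-/

/-- The quadratic `E` in the numerator of `x - C x`, for Chebyshev's method `C` applied to
`z ^ k * (z - 1) ^ m`; its roots are the extraneous fixed points of `C`. The multiplicities `k` and
`m` may be arbitrary ring elements. -/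
def extraneousQuadratic {R : Type*} [CommRing R] (k m x : R) : R :=
  (k + m) * (3 * k + 3 * m - 1) * x ^ 2 - 2 * k * (3 * k + 3 * m - 1) * x + (3 * k ^ 2 - k)

/-- The distance from the pole `k / (k + m)` of Chebyshev's method for `z ^ k * (z - 1) ^ m` to
either of its extraneous fixed points. -/
noncomputable def extraneousOffset (k m : ℝ) : ℝ :=
  √(k * m * (3 * k + 3 * m - 1)) / ((k + m) * (3 * k + 3 * m - 1))

theorem add_mul_extraneousQuadratic {R : Type*} [CommRing R] (k m x : R) :
    (k + m) * extraneousQuadratic k m x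
      = (3 * k + 3 * m - 1) * ((k + m) * x - k) ^ 2 - k * m := by
  unfold extraneousQuadratic
  ring

theorem extraneousQuadratic_pole_add_eq_zero_iff {K : Type*} [Field K] {k m : K}
    (hkm : k + m ≠ 0) (t : K) :
    extraneousQuadratic k m (k / (k + m) + t) = 0
      ↔ (3 * k + 3 * m - 1) * ((k + m) * t) ^ 2 = k * m := by
  rw [← mul_eq_zero_iff_left hkm, add_mul_extraneousQuadratic, mul_add, mul_div_cancel₀ k hkm,
    add_sub_cancel_left, sub_eq_zero]

theorem extraneousOffset_comm (k m : ℝ) : extraneousOffset k m = extraneousOffset m k := by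
  simp only [extraneousOffset, mul_comm k m, add_comm k m, add_comm (3 * k) (3 * m)]

theorem mul_sq_add_mul_extraneousOffset {k m : ℝ} (hkm : k + m ≠ 0) (hD : 3 * k + 3 * m - 1 ≠ 0)
    (h : 0 ≤ k * m * (3 * k + 3 * m - 1)) :
    (3 * k + 3 * m - 1) * ((k + m) * extraneousOffset k m) ^ 2 = k * m := by
  have hscaled : (k + m) * extraneousOffset k m
      = √(k * m * (3 * k + 3 * m - 1)) / (3 * k + 3 * m - 1) := by
    rw [extraneousOffset, mul_div_assoc', mul_div_mul_left _ _ hkm]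
  rw [hscaled, div_pow, Real.sq_sqrt h, mul_div_assoc', div_eq_iff (pow_ne_zero 2 hD)]
  ring

theorem extraneousOffset_pos {k m : ℝ} (hk : 0 < k) (hm : 0 < m) (hD : 0 < 3 * k + 3 * m - 1) :
    0 < extraneousOffset k m := by
  unfold extraneousOffset
  positivity

theorem extraneousOffset_lt_pole {k m : ℝ} (hk : 1 / 3 < k) (hm : 0 < m) :
    extraneousOffset k m < k / (k + m) := by
  have hk₀ : 0 < k := by linarith
  have hD : 0 < 3 * k + 3 * m - 1 := by linarith
  have hm_lt : m < k * (3 * k + 3 * m - 1) := by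
    have : 0 < (k + m) * (3 * k - 1) := mul_pos (by linarith) (by linarith)
    linarith
  have hsqrt : √(k * m * (3 * k + 3 * m - 1)) < k * (3 * k + 3 * m - 1) := by
    rw [Real.sqrt_lt' (by positivity)]
    calc k * m * (3 * k + 3 * m - 1) = k * (3 * k + 3 * m - 1) * m := by ring
      _ < k * (3 * k + 3 * m - 1) * (k * (3 * k + 3 * m - 1)) := by gcongr
      _ = (k * (3 * k + 3 * m - 1)) ^ 2 := (sq _).symm
  calc extraneousOffset k m
      < k * (3 * k + 3 * m - 1) / ((k + m) * (3 * k + 3 * m - 1)) := by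
        unfold extraneousOffset
        gcongr
    _ = k / (k + m) := mul_div_mul_right _ _ hD.ne'

theorem extraneousOffset_lt_one_sub_pole {k m : ℝ} (hk : 0 < k) (hm : 1 / 3 < m) :
    extraneousOffset k m < 1 - k / (k + m) := by
  have hkm : k + m ≠ 0 := by linarith
  rw [one_sub_div hkm, add_sub_cancel_left, extraneousOffset_comm, add_comm k m]
  exact extraneousOffset_lt_pole hm hk

-- The bounds `1 / 3` are sharp: `E 0 = k (3k - 1)` and `E 1 = m (3m - 1)`.
theorem extraneous_fixed_points_general (k m : ℝ) (hk : 1 / 3 < k) (hm : 1 / 3 < m)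
    (E : ℝ → ℝ)
    (hE : ∀ x : ℝ, E x = (k + m) * (3 * k + 3 * m - 1) * x ^ 2
      - 2 * k * (3 * k + 3 * m - 1) * x + (3 * k ^ 2 - k))
    (C : ℝ → ℝ)
    (hC : ∀ x : ℝ, x ≠ k / (k + m) →
      C x = x - x * (x - 1) * E x / (2 * ((k + m) * x - k) ^ 3))
    (e₁ e₂ : ℝ)
    (he₁ : e₁ = k / (k + m)
      - √(k * m * (3 * k + 3 * m - 1)) / ((k + m) * (3 * k + 3 * m - 1)))
    (he₂ : e₂ = k / (k + m)
      + √(k * m * (3 * k + 3 * m - 1)) / ((k + m) * (3 * k + 3 * m - 1))) :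
    E e₁ = 0 ∧ E e₂ = 0 ∧ C e₁ = e₁ ∧ C e₂ = e₂ ∧
      0 < e₁ ∧ e₁ < k / (k + m) ∧ k / (k + m) < e₂ ∧ e₂ < 1 ∧
      k / (k + m) - e₁ = e₂ - k / (k + m) := by
  obtain rfl : E = extraneousQuadratic k m := funext hE
  rw [← extraneousOffset] at he₁ he₂
  have hk₀ : 0 < k := by linarith
  have hm₀ : 0 < m := by linarith
  have hD : 0 < 3 * k + 3 * m - 1 := by linarith
  have hkm : k + m ≠ 0 := by positivity
  have hoffset_sq := mul_sq_add_mul_extraneousOffset hkm hD.ne' (by positivity)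
  have hroot₁ : extraneousQuadratic k m e₁ = 0 := by
    rwa [he₁, sub_eq_add_neg, extraneousQuadratic_pole_add_eq_zero_iff hkm, mul_neg, neg_sq]
  have hroot₂ : extraneousQuadratic k m e₂ = 0 := by
    rwa [he₂, extraneousQuadratic_pole_add_eq_zero_iff hkm]
  have hfix (x : ℝ) (hx : x ≠ k / (k + m)) (hroot : extraneousQuadratic k m x = 0) : C x = x := by
    rw [hC x hx, hroot, mul_zero, zero_div, sub_zero]
  have hoffset_pos := extraneousOffset_pos hk₀ hm₀ hD
  have hoffset_lt := extraneousOffset_lt_pole hk hm₀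
  have hoffset_lt' := extraneousOffset_lt_one_sub_pole hk₀ hm
  have he₁_lt : e₁ < k / (k + m) := by linarith
  have hlt_e₂ : k / (k + m) < e₂ := by linarith
  exact ⟨hroot₁, hroot₂, hfix e₁ he₁_lt.ne hroot₁, hfix e₂ hlt_e₂.ne' hroot₂,
    by linarith, he₁_lt, hlt_e₂, by linarith, by linarith⟩

/-- For `k, m ≥ 1`, the two extraneous fixed points
`e₁ = k/(k+m) - √(km(3k+3m-1))/((k+m)(3k+3m-1))` and
`e₂ = k/(k+m) + √(km(3k+3m-1))/((k+m)(3k+3m-1))` of the Chebyshev map `C` for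
`z^k(z-1)^m` are roots of `E`, fixed points of `C`, satisfy
`0 < e₁ < k/(k+m) < e₂ < 1`, and are equidistant from the pole `ξ = k/(k+m)`. -/
theorem extraneous_fixed_points (k m : ℕ) (hk : 1 ≤ k) (hm : 1 ≤ m)
    (E : ℝ → ℝ)
    (hE : ∀ x : ℝ, E x = ((k : ℝ) + m) * (3 * k + 3 * m - 1) * x ^ 2
      - 2 * k * (3 * k + 3 * m - 1) * x + (3 * (k : ℝ) ^ 2 - k))
    (C : ℝ → ℝ)
    (hC : ∀ x : ℝ, x ≠ (k : ℝ) / ((k : ℝ) + m) →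
      C x = x - x * (x - 1) * E x / (2 * (((k : ℝ) + m) * x - k) ^ 3))
    (e₁ e₂ : ℝ)
    (he₁ : e₁ = (k : ℝ) / ((k : ℝ) + m)
      - Real.sqrt ((k : ℝ) * m * (3 * k + 3 * m - 1)) / (((k : ℝ) + m) * (3 * k + 3 * m - 1)))
    (he₂ : e₂ = (k : ℝ) / ((k : ℝ) + m)
      + Real.sqrt ((k : ℝ) * m * (3 * k + 3 * m - 1)) / (((k : ℝ) + m) * (3 * k + 3 * m - 1))) :
    E e₁ = 0 ∧ E e₂ = 0 ∧ C e₁ = e₁ ∧ C e₂ = e₂ ∧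
      0 < e₁ ∧ e₁ < (k : ℝ) / ((k : ℝ) + m) ∧ (k : ℝ) / ((k : ℝ) + m) < e₂ ∧ e₂ < 1 ∧
      (k : ℝ) / ((k : ℝ) + m) - e₁ = e₂ - (k : ℝ) / ((k : ℝ) + m) := by
  have one_third_lt {n : ℕ} (hn : 1 ≤ n) : (1 / 3 : ℝ) < n :=
    lt_of_lt_of_le (by norm_num) (Nat.one_le_cast.2 hn)
  exact extraneous_fixed_points_general k m (one_third_lt hk) (one_third_lt hm)
    E hE C hC e₁ e₂ he₁ he₂
end

section
/- Fix an integer m ≥ 1 and let ζ > 0 satisfy φ(ζ) = 0. Then: (a) for every x > ζ there exists n ≥ 1 with φⁿ(x) ∈ (0, ζ]; and (b) for every real x such that φⁿ(x) ≠ 0 for all n ≥ 0, the set of n with φⁿ(x) ∈ (0, ζ) is infinite. -/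
/-!
Beyond its positive zero `ζ` the map is continuous, positive and strictly below the identity. An
orbit staying above `ζ` would decrease to a fixed point, of which there is none, so every orbit
drops below `ζ`, and it lands in `(0, ζ]` because its last point above `ζ` has a positive image.

An orbit avoiding `0` also avoids `ζ`, so if it starts to the right of `0` it meets `(0, ζ)`. The
map is odd, so if it starts to the left of `0` it meets `(-ζ, 0)`, where the map is positive; this
brings it to the right of `0`. Restarting from later points gives infinitely many visits.
-/

open Filter Function Set Topology

section Iterate

variable {α : Type*} {f : α → α} {s t : Set α} {x : α}

theorem exists_iterate_mem_of_mapsTo_union (hf : MapsTo f s (s ∪ t)) (hx : x ∈ s)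
    (hexit : ∃ n : ℕ, f^[n] x ∉ s) : ∃ n : ℕ, 1 ≤ n ∧ f^[n] x ∈ t := by
  by_contra! hnever
  have hstay (n : ℕ) : f^[n] x ∈ s := by
    induction n with
    | zero => exact hx
    | succ n ih =>
      have hstep : f^[n + 1] x ∈ s ∪ t := iterate_succ_apply' f n x ▸ hf ih
      exact hstep.resolve_right (hnever (n + 1) n.succ_pos)
  exact hexit.elim fun n hn ↦ hn (hstay n)

theorem infinite_setOf_iterate_mem (hs : MapsTo f s s)
    (hvisit : ∀ y ∈ s, ∃ n : ℕ, f^[n] y ∈ t) (hx : x ∈ s) : {n : ℕ | f^[n] x ∈ t}.Infinite := by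
  refine infinite_of_forall_exists_gt fun N ↦ ?_
  obtain ⟨n, hn⟩ := hvisit _ (hs.iterate (N + 1) hx)
  rw [← iterate_add_apply] at hn
  exact ⟨n + (N + 1), hn, by omega⟩

end Iterate

section Order

variable {α : Type*} [ConditionallyCompleteLinearOrder α] [TopologicalSpace α] [OrderTopology α]
  {f : α → α} {a b : α}

theorem exists_iterate_le_of_forall_lt_self (hcont : ContinuousOn f (Ici b))
    (hlt : ∀ y ∈ Ici b, f y < y) (x : α) : ∃ n : ℕ, f^[n] x ≤ b := by
  by_contra! habove
  have hanti : Antitone fun n ↦ f^[n] x := antitone_nat_of_succ_le fun n ↦ by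
    rw [iterate_succ_apply']
    exact (hlt _ (habove n).le).le
  have hbdd : BddBelow (range fun n ↦ f^[n] x) := ⟨b, forall_mem_range.2 fun n ↦ (habove n).le⟩
  obtain ⟨l, hl⟩ : ∃ l, Tendsto (fun n ↦ f^[n] x) atTop (𝓝 l) :=
    ⟨_, tendsto_atTop_ciInf hanti hbdd⟩
  have hbl : l ∈ Ici b := ge_of_tendsto' hl fun n ↦ (habove n).le
  have hfl : Tendsto (fun n ↦ f^[n + 1] x) atTop (𝓝 (f l)) := by
    simp only [iterate_succ_apply']
    exact (hcont l hbl).tendsto.comp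
      (tendsto_nhdsWithin_iff.2 ⟨hl, .of_forall fun n ↦ (habove n).le⟩)
  exact (hlt l hbl).ne (tendsto_nhds_unique hfl (hl.comp (tendsto_add_atTop_nat 1)))

theorem exists_iterate_mem_Ioc_of_forall_lt_self (hcont : ContinuousOn f (Ici b))
    (hlt : ∀ y ∈ Ici b, f y < y) (hmaps : MapsTo f (Ioi b) (Ioi a)) {x : α} (hx : b < x) :
    ∃ n : ℕ, 1 ≤ n ∧ f^[n] x ∈ Ioc a b := by
  refine exists_iterate_mem_of_mapsTo_union (s := Ioi b) (fun y hy ↦ ?_) hx ?_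
  · exact (lt_or_ge b (f y)).imp_right fun hle ↦ ⟨hmaps hy, hle⟩
  · simpa only [mem_Ioi, not_lt] using exists_iterate_le_of_forall_lt_self hcont hlt x

end Order

theorem exists_iterate_mem_Ioo_of_forall_iterate_ne {α : Type*} [LinearOrder α] {f : α → α}
    {a b x : α} (hb : f b = a) (hreturn : ∀ y, b < y → ∃ n : ℕ, f^[n] y ∈ Ioc a b)
    (hne : ∀ n : ℕ, f^[n] x ≠ a) (hx : a < x) : ∃ n : ℕ, f^[n] x ∈ Ioo a b := by
  have hne_b (n : ℕ) : f^[n] x ≠ b := fun h ↦ hne (n + 1) (by rw [iterate_succ_apply', h, hb])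
  obtain ⟨n, hn⟩ : ∃ n : ℕ, f^[n] x ∈ Ioc a b :=
    (le_or_gt x b).elim (fun hle ↦ ⟨0, hx, hle⟩) (hreturn x)
  exact ⟨n, hn.1, hn.2.lt_of_ne (hne_b n)⟩

theorem iterate_neg_of_forall_iterate_ne_zero {G : Type*} [AddGroup G] {f : G → G}
    (hodd : ∀ y, y ≠ 0 → f (-y) = -f y) {x : G} (hx : ∀ n : ℕ, f^[n] x ≠ 0) (n : ℕ) :
    f^[n] (-x) = -f^[n] x := by
  induction n with
  | zero => rfl
  | succ n ih => rw [iterate_succ_apply', iterate_succ_apply', ih, hodd _ (hx n)]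

section OddMap

variable {G : Type*} [AddCommGroup G] [LinearOrder G] [IsOrderedAddMonoid G] {f : G → G} {ζ x : G}

theorem exists_iterate_pos_of_odd (hzero : f ζ = 0)
    (hreturn : ∀ y, ζ < y → ∃ n : ℕ, f^[n] y ∈ Ioc 0 ζ) (hodd : ∀ y, y ≠ 0 → f (-y) = -f y)
    (hneg : ∀ y ∈ Ioo 0 ζ, f y < 0) (hx : ∀ n : ℕ, f^[n] x ≠ 0) : ∃ n : ℕ, 0 < f^[n] x := by
  rcases (hx 0).lt_or_gt with hx_neg | hx_pos
  · have hmirror := iterate_neg_of_forall_iterate_ne_zero hodd hx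
    obtain ⟨n, hn⟩ := exists_iterate_mem_Ioo_of_forall_iterate_ne hzero hreturn
      (fun n ↦ hmirror n ▸ neg_ne_zero.2 (hx n)) (neg_pos.2 hx_neg)
    refine ⟨n + 1, neg_neg_iff_pos.1 ?_⟩
    rw [← hmirror, iterate_succ_apply']
    exact hneg _ hn
  · exact ⟨0, hx_pos⟩

theorem infinite_setOf_iterate_mem_Ioo_of_odd (hzero : f ζ = 0)
    (hreturn : ∀ y, ζ < y → ∃ n : ℕ, f^[n] y ∈ Ioc 0 ζ) (hodd : ∀ y, y ≠ 0 → f (-y) = -f y)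
    (hneg : ∀ y ∈ Ioo 0 ζ, f y < 0) (hx : ∀ n : ℕ, f^[n] x ≠ 0) :
    {n : ℕ | f^[n] x ∈ Ioo 0 ζ}.Infinite := by
  have shift {y : G} (hy : ∀ n : ℕ, f^[n] y ≠ 0) (k n : ℕ) : f^[n] (f^[k] y) ≠ 0 := by
    rw [← iterate_add_apply]
    exact hy (n + k)
  refine infinite_setOf_iterate_mem (s := {y | ∀ n : ℕ, f^[n] y ≠ 0})
    (fun y hy ↦ shift hy 1) (fun y hy ↦ ?_) hx
  obtain ⟨k, hk⟩ := exists_iterate_pos_of_odd hzero hreturn hodd hneg hy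
  obtain ⟨n, hn⟩ :=
    exists_iterate_mem_Ioo_of_forall_iterate_ne hzero hreturn (shift hy k) hk
  exact ⟨n + k, by rwa [iterate_add_apply]⟩

end OddMap

/-- The odd rational map `y ↦ (A y⁴ - B y² - 1) / (C y³)`, of which `φ` is the member
`A = 16(2m-1)(4m-1)`, `B = 24m`, `C = 128m²`. Division by zero gives it the value `0` at `0`,
which keeps it odd there. -/
noncomputable def quarticMap (A B C y : ℝ) : ℝ :=
  (A * y ^ 4 - B * y ^ 2 - 1) / (C * y ^ 3)

namespace quarticMap

variable {A B C ζ y : ℝ}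

theorem apply_neg (A B C y : ℝ) : quarticMap A B C (-y) = -quarticMap A B C y := by
  simp only [quarticMap, Even.neg_pow (by decide : Even 4), even_two.neg_pow,
    Odd.neg_pow (by decide : Odd 3), mul_neg, div_neg]

theorem continuousOn (hC : C ≠ 0) : ContinuousOn (quarticMap A B C) {0}ᶜ :=
  ContinuousOn.div (by fun_prop) (by fun_prop) fun _ hy ↦ mul_ne_zero hC (pow_ne_zero 3 hy)

theorem lt_self (hAC : A ≤ C) (hB : 0 ≤ B) (hC : 0 < C) (hy : 0 < y) : quarticMap A B C y < y := by
  rw [quarticMap, div_lt_iff₀ (by positivity)]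
  calc A * y ^ 4 - B * y ^ 2 - 1 < A * y ^ 4 := by linarith [mul_nonneg hB (sq_nonneg y)]
    _ ≤ C * y ^ 4 := by gcongr
    _ = y * (C * y ^ 3) := by ring

theorem eq_mul_of_root (hC : C ≠ 0) (hζ : ζ ≠ 0) (hroot : quarticMap A B C ζ = 0) (y : ℝ) :
    quarticMap A B C y =
      (y ^ 2 - ζ ^ 2) * ((B * y ^ 2 * ζ ^ 2 + y ^ 2 + ζ ^ 2) / (C * y ^ 3 * ζ ^ 4)) := by
  have hnum : A * ζ ^ 4 - B * ζ ^ 2 - 1 = 0 :=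
    (div_eq_zero_iff.1 hroot).resolve_right (mul_ne_zero hC (pow_ne_zero 3 hζ))
  rw [quarticMap, ← mul_div_mul_right _ _ (pow_ne_zero 4 hζ), mul_div_assoc']
  congr 1
  linear_combination y ^ 4 * hnum

theorem pos_of_lt (hB : 0 ≤ B) (hC : 0 < C) (hζ : 0 < ζ) (hroot : quarticMap A B C ζ = 0)
    (hy : ζ < y) : 0 < quarticMap A B C y := by
  have hy_pos : 0 < y := hζ.trans hy
  rw [eq_mul_of_root hC.ne' hζ.ne' hroot]
  exact mul_pos (sub_pos.2 (pow_lt_pow_left₀ hy hζ.le two_ne_zero)) (by positivity)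

theorem neg_of_mem_Ioo (hB : 0 ≤ B) (hC : 0 < C) (hroot : quarticMap A B C ζ = 0)
    (hy : y ∈ Ioo 0 ζ) : quarticMap A B C y < 0 := by
  obtain ⟨hy_pos, hyζ⟩ := hy
  have hζ : 0 < ζ := hy_pos.trans hyζ
  rw [eq_mul_of_root hC.ne' hζ.ne' hroot]
  exact mul_neg_of_neg_of_pos (sub_neg.2 (pow_lt_pow_left₀ hyζ hy_pos.le two_ne_zero))
    (by positivity)

end quarticMap

theorem phi_iterates_return_general {A B C : ℝ} (hAC : A ≤ C) (hB : 0 ≤ B) (hC : 0 < C)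
    {φ : ℝ → ℝ} (hφ : ∀ y : ℝ, y ≠ 0 → φ y = quarticMap A B C y)
    {ζ : ℝ} (hζ : 0 < ζ) (hζ0 : φ ζ = 0) :
    (∀ x : ℝ, ζ < x → ∃ n : ℕ, 1 ≤ n ∧ φ^[n] x ∈ Ioc 0 ζ) ∧
    (∀ x : ℝ, (∀ n : ℕ, φ^[n] x ≠ 0) → {n : ℕ | φ^[n] x ∈ Ioo 0 ζ}.Infinite) := by
  have hroot : quarticMap A B C ζ = 0 := hφ ζ hζ.ne' ▸ hζ0
  have hφ_pos {y : ℝ} (hy : 0 < y) : φ y = quarticMap A B C y := hφ y hy.ne'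
  have hcont : ContinuousOn φ (Ici ζ) :=
    ((quarticMap.continuousOn hC.ne').congr hφ).mono fun y hy ↦ (hζ.trans_le hy).ne'
  have hlt : ∀ y ∈ Ici ζ, φ y < y := fun y hy ↦
    have hy_pos : 0 < y := hζ.trans_le hy
    hφ_pos hy_pos ▸ quarticMap.lt_self hAC hB hC hy_pos
  have hmaps : MapsTo φ (Ioi ζ) (Ioi 0) := fun y hy ↦
    hφ_pos (hζ.trans hy) ▸ quarticMap.pos_of_lt hB hC hζ hroot hy
  have hneg : ∀ y ∈ Ioo 0 ζ, φ y < 0 := fun y hy ↦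
    hφ_pos hy.1 ▸ quarticMap.neg_of_mem_Ioo hB hC hroot hy
  have hodd : ∀ y, y ≠ 0 → φ (-y) = -φ y := fun y hy ↦ by
    rw [hφ y hy, hφ (-y) (neg_ne_zero.2 hy), quarticMap.apply_neg]
  have hreturn (x : ℝ) (hx : ζ < x) : ∃ n : ℕ, 1 ≤ n ∧ φ^[n] x ∈ Ioc 0 ζ :=
    exists_iterate_mem_Ioc_of_forall_lt_self hcont hlt hmaps hx
  exact ⟨hreturn, fun x ↦ infinite_setOf_iterate_mem_Ioo_of_odd hζ0
    (fun y hy ↦ (hreturn y hy).imp fun _ ↦ And.right) hodd hneg⟩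

/-- For `m ≥ 1` and `ζ > 0` with `φ(ζ) = 0`: (a) every `x > ζ` has some iterate
`φⁿ(x) ∈ (0, ζ]` with `n ≥ 1`; (b) if no iterate of `x` is `0`, then `φⁿ(x) ∈ (0, ζ)`
for infinitely many `n`. -/
theorem phi_iterates_return (m : ℕ) (hm : 1 ≤ m)
    (φ : ℝ → ℝ)
    (hφ : ∀ y : ℝ, y ≠ 0 →
      φ y = (16 * (2 * (m : ℝ) - 1) * (4 * m - 1) * y ^ 4 - 24 * m * y ^ 2 - 1)
        / (128 * (m : ℝ) ^ 2 * y ^ 3))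
    (ζ : ℝ) (hζ : 0 < ζ) (hζ0 : φ ζ = 0) :
    (∀ x : ℝ, ζ < x → ∃ n : ℕ, 1 ≤ n ∧ φ^[n] x ∈ Set.Ioc 0 ζ) ∧
    (∀ x : ℝ, (∀ n : ℕ, φ^[n] x ≠ 0) → {n : ℕ | φ^[n] x ∈ Set.Ioo 0 ζ}.Infinite) := by
  have hm_one : (1 : ℝ) ≤ m := mod_cast hm
  exact phi_iterates_return_general (by nlinarith) (by positivity) (by positivity) hφ hζ hζ0
end
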